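/- For every η > 0 there exists n_0 > 0 such that the following holds: let n ≥ n_0 be an integer divisible by 4, and let H be a stable 3-graph on vertex set [n]. If e(H) > binom(n,3) - binom(3n/4,3) - η^4·n^3 and the maximum matching size ν(H) < n/4, then H is η-close to H_3^*(n, n/4 - 1), i.e., there is an isomorphic copy H' of H on [n] with |E(H_3^*(n,n/4-1)) \ E(H')| < η·n^3. -/

import Mathlib

/-- A 3-graph `H` on `[n]` (modelled as `Fin n`, with its natural order) is stable
if whenever `e ≤ f` coordinatewise (the `i`-th smallest element of `e` is at most
the `i`-th smallest element of `f`) and `f ∈ H`, also `e ∈ H`. -/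
def StableThreeGraph {n : ℕ} (H : Finset (Finset (Fin n))) : Prop :=
  ∀ (e f : Finset (Fin n)) (he : e.card = 3) (hf : f.card = 3),
    (∀ i : Fin 3, ((e.orderIsoOfFin he i : Fin n) : ℕ) ≤ ((f.orderIsoOfFin hf i : Fin n) : ℕ)) →
    f ∈ H → e ∈ H

/-- The 3-graph `H₃^*(n, m)` on `[n]`: all triples meeting `[m]` (the first `m`
elements of `Fin n`). -/
def H3Star (n m : ℕ) : Finset (Finset (Fin n)) :=
  (Finset.powersetCard 3 (Finset.univ : Finset (Fin n))).filter
    (fun e => ∃ v : Fin n, v ∈ e ∧ (v : ℕ) < m)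

/-!
A stable 3-graph `H` on `[n]` with `ν(H) < n/4` has a fractional vertex cover `g` of weight at most
`n/4 + εn`: cut `[n]` into a bounded number of long blocks; by linear programming duality, either
the block patterns that are completely contained in `H` have a fractional cover of weight about
`n/4`, which stability carries over to `H`, or they have a fractional matching of larger weight,
which rounds to a matching of size at least `n/4` in `H`.

The edges of `H` are triples on which `g` sums to at least `1`. If `X`, `Y`, `Z` are independent
copies of a nonnegative variable of mean at most `1/4`, then
`P(X + Y + Z ≥ 1) ≤ 37/64 = 1 - (3/4)³`, and this survives if triples with all three values below
`1 - η` are given the slightly larger weight `1 + η/16`. As this weight is multilinear in the three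
laws, it suffices to treat (three different) laws supported on two points. Since `H` has almost
`37/64 · n³/6` edges, only `O(η³n³)` of them have `g < 1 - η` throughout. Now sort the vertices by
decreasing `g`. At most `(n/4 + εn)/(1 - η)` vertices have `g ≥ 1 - η`, so few of these lie beyond
the first `n/4 - 1`, and hence few edges of `H` avoid `[n/4 - 1]`. Comparing the sizes of `H` and
`H₃^*(n, n/4 - 1)` bounds the number of edges missing from `H`.
-/

/-! ### Laws supported on two points -/

/-- A law on two values `lo ≤ μ < hi`, with `0 ≤ lo`, of mean `μ`. The mean determines the
probability of `hi`, see `TwoPointLaw.prob`. -/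
structure TwoPointLaw (μ : ℝ) where
  lo : ℝ
  hi : ℝ
  lo_nonneg : 0 ≤ lo
  lo_le : lo ≤ μ
  lt_hi : μ < hi

namespace TwoPointLaw

variable {μ : ℝ} (P Q R : TwoPointLaw μ)

/-- The probability of the value `hi`. -/
noncomputable def prob : ℝ := (μ - P.lo) / (P.hi - P.lo)

/-- The expectation of `φ X`, where `X` has law `P`. -/
noncomputable def expect (φ : ℝ → ℝ) : ℝ := (1 - P.prob) * φ P.lo + P.prob * φ P.hi

lemma lo_lt_hi : P.lo < P.hi := P.lo_le.trans_lt P.lt_hi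

lemma prob_nonneg : 0 ≤ P.prob :=
  div_nonneg (sub_nonneg.2 P.lo_le) (sub_nonneg.2 P.lo_lt_hi.le)

lemma prob_le_one : P.prob ≤ 1 :=
  div_le_one_of_le₀ (sub_le_sub_right P.lt_hi.le _) (sub_nonneg.2 P.lo_lt_hi.le)

lemma prob_mul_sub : P.prob * (P.hi - P.lo) = μ - P.lo :=
  div_mul_cancel₀ _ (sub_pos.2 P.lo_lt_hi).ne'

variable {P} in
lemma expect_le {φ : ℝ → ℝ} {a b : ℝ} (ha : φ P.lo ≤ a) (hb : φ P.hi ≤ b) :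
    P.expect φ ≤ (1 - P.prob) * a + P.prob * b :=
  add_le_add (mul_le_mul_of_nonneg_left ha (sub_nonneg.2 P.prob_le_one))
    (mul_le_mul_of_nonneg_left hb P.prob_nonneg)

variable {P} in
lemma expect_le_of_forall_le {φ : ℝ → ℝ} {c : ℝ} (h : ∀ x, φ x ≤ c) : P.expect φ ≤ c :=
  (expect_le (h _) (h _)).trans_eq (by ring)

lemma expect_mono {φ ψ : ℝ → ℝ} (h : ∀ x, φ x ≤ ψ x) : P.expect φ ≤ P.expect ψ :=
  expect_le (h _) (h _)

lemma expect_const_mul (c : ℝ) (φ : ℝ → ℝ) : P.expect (fun x => c * φ x) = c * P.expect φ := by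
  simp only [expect]
  ring

lemma expect_sum_mul {ι : Type*} [Fintype ι] (m : ι → ℝ) (φ : ι → ℝ → ℝ) :
    P.expect (fun x => ∑ i, m i * φ i x) = ∑ i, m i * P.expect (φ i) := by
  simp only [expect, Finset.mul_sum, ← Finset.sum_add_distrib]
  exact Finset.sum_congr rfl fun i _ => by ring

lemma expect_comm (w : ℝ → ℝ → ℝ) :
    P.expect (fun x => Q.expect (w x)) = Q.expect fun y => P.expect fun x => w x y := by
  simp only [expect]
  ring

/-- The expectation of `w X Y Z` for independent `X`, `Y`, `Z` of laws `P`, `Q`, `R`. -/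
noncomputable def expect₃ (w : ℝ → ℝ → ℝ → ℝ) : ℝ :=
  P.expect fun x => Q.expect fun y => R.expect fun z => w x y z

end TwoPointLaw

section Reduction

variable {ι : Type*} [Fintype ι] {m f : ι → ℝ} {C : ℝ}

-- The hypothesis provides a line through `(μ, C)` above the graph of `φ` at all values of `f`. The
-- extra point `μ + 1` makes the set over which its slope is maximised nonempty.
lemma sum_mul_le_of_forall_twoPointLaw {φ : ℝ → ℝ} (hm : m ∈ stdSimplex ℝ ι) (hf : ∀ i, 0 ≤ f i)
    (h : ∀ P : TwoPointLaw (∑ i, m i * f i), P.expect φ ≤ C) : ∑ i, m i * φ (f i) ≤ C := by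
  obtain ⟨μ, hμ⟩ : ∃ μ, μ = ∑ i, m i * f i := ⟨_, rfl⟩
  rw [← hμ] at h
  obtain ⟨v, hv, hmax⟩ := Finset.exists_max_image
    (insert (μ + 1) ((Finset.univ.image f).filter (μ < ·))) (fun v => (φ v - C) / (v - μ))
    (Finset.insert_nonempty _ _)
  have hμv : 0 < v - μ := by
    rcases Finset.mem_insert.1 hv with rfl | hv
    · linarith
    · exact sub_pos.2 (Finset.mem_filter.1 hv).2
  obtain ⟨l, hl⟩ : ∃ l, φ v = C + l * (v - μ) :=
    ⟨(φ v - C) / (v - μ), by rw [div_mul_cancel₀ _ hμv.ne']; ring⟩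
  have line : ∀ i, φ (f i) ≤ C + l * (f i - μ) := by
    intro i
    rcases lt_or_ge μ (f i) with hi | hi
    · have hslope := hmax (f i) (by simp [hi])
      rw [hl, add_sub_cancel_left, mul_div_cancel_right₀ _ hμv.ne', div_le_iff₀ (sub_pos.2 hi)]
        at hslope
      linarith
    · let P : TwoPointLaw μ := ⟨f i, v, hf i, hi, sub_pos.1 hμv⟩
      have hmean : (v - f i) * P.prob = μ - f i := (mul_comm _ _).trans P.prob_mul_sub
      have hP : (v - f i) * ((1 - P.prob) * φ (f i) + P.prob * φ v) ≤ (v - f i) * C :=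
        mul_le_mul_of_nonneg_left (h P) (by linarith)
      have hP' : (v - μ) * φ (f i) ≤ (v - μ) * (C + l * (f i - μ)) := by
        rw [hl] at hP
        linear_combination hP + (φ (f i) - (C + l * (v - μ))) * hmean
      exact le_of_mul_le_mul_left hP' hμv
  calc ∑ i, m i * φ (f i) ≤ ∑ i, m i * (C + l * (f i - μ)) :=
        Finset.sum_le_sum fun i _ => mul_le_mul_of_nonneg_left (line i) (hm.1 i)
    _ = (C - l * μ) * ∑ i, m i + l * ∑ i, m i * f i := by
        rw [Finset.mul_sum, Finset.mul_sum, ← Finset.sum_add_distrib]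
        exact Finset.sum_congr rfl fun i _ => by ring
    _ = C := by rw [hm.2, ← hμ]; ring

lemma sum_mul_triple_le_of_forall_twoPointLaw {w : ℝ → ℝ → ℝ → ℝ} (hm : m ∈ stdSimplex ℝ ι)
    (hf : ∀ i, 0 ≤ f i) (h : ∀ P Q R : TwoPointLaw (∑ i, m i * f i), P.expect₃ Q R w ≤ C) :
    ∑ i, m i * ∑ j, m j * ∑ k, m k * w (f i) (f j) (f k) ≤ C := by
  refine sum_mul_le_of_forall_twoPointLaw
    (φ := fun x => ∑ j, m j * ∑ k, m k * w x (f j) (f k)) hm hf fun P => ?_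
  rw [P.expect_sum_mul]
  refine sum_mul_le_of_forall_twoPointLaw
    (φ := fun y => P.expect fun x => ∑ k, m k * w x y (f k)) hm hf fun Q => ?_
  simp only [P.expect_sum_mul, Q.expect_sum_mul]
  refine sum_mul_le_of_forall_twoPointLaw
    (φ := fun z => Q.expect fun y => P.expect fun x => w x y z) hm hf fun R => ?_
  refine (le_of_eq ?_).trans (h P Q R)
  simp only [TwoPointLaw.expect₃, TwoPointLaw.expect]
  ring

end Reduction

section TwoPointInequalities

variable {a b c : ℝ}

lemma four_ninths_le_one_sub_mul_one_sub {p r : ℝ} (ha : 0 ≤ a) (ha1 : a ≤ 1) (hb : 0 ≤ b)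
    (hb1 : b ≤ 1) (hp : p * (1 + a + b) ≤ a) (hr : r * (1 + a + b) ≤ b) :
    4 / 9 ≤ (1 - p) * (1 - r) := by
  have hpoly : 4 * (1 + a + b) ^ 2 ≤ 9 * ((1 + b) * (1 + a)) := by
    nlinarith [mul_nonneg (sub_nonneg.2 ha1) (sub_nonneg.2 hb1), mul_nonneg ha (sub_nonneg.2 ha1),
      mul_nonneg hb (sub_nonneg.2 hb1)]
  have hp' : 1 + b ≤ (1 - p) * (1 + a + b) := by linarith
  have hr' : 1 + a ≤ (1 - r) * (1 + a + b) := by linarith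
  have hprod := mul_le_mul hp' hr' (by positivity) (by linarith)
  refine le_of_mul_le_mul_right (a := (1 + a + b) ^ 2) ?_ (by positivity)
  linarith

lemma majority_polynomial_le {t : ℝ} (ha : 0 ≤ a) (ha1 : a ≤ 1) (hb : 0 ≤ b) (hb1 : b ≤ 1)
    (ht : 0 ≤ t) (ht1 : t ≤ 1) :
    (a + b) * (a + b + 1 - t) - (1 - t) * (a * b) ≤ 5 / 9 * (1 + t) * (a + b + 1 - t) ^ 2 := by
  obtain ⟨u, rfl⟩ : ∃ u, t = 1 - u := ⟨1 - t, by ring⟩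
  have hu : 0 ≤ u := by linarith
  have hu1 : 0 ≤ 1 - u := by linarith
  have hfar : 0 ≤ (1 - u ^ 2) * (a + b) ^ 2 := mul_nonneg (by nlinarith) (sq_nonneg _)
  have hnear : 0 ≤ u ^ 2 * ((2 - (a + b)) * (10 / 3 - (a + b))) :=
    mul_nonneg (sq_nonneg u) (mul_nonneg (by linarith) (by linarith))
  nlinarith [sq_nonneg (a - b), mul_nonneg hu (mul_nonneg ha (sub_nonneg.2 ha1)),
    mul_nonneg hu (mul_nonneg hb (sub_nonneg.2 hb1)), mul_nonneg (sq_nonneg u) hu1,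
    mul_nonneg hu1 (mul_nonneg ha hb), mul_nonneg (add_nonneg ha hb) (mul_nonneg hu hu1)]

lemma majority_le_of_mul_le {p q r t : ℝ} (hq : 0 ≤ q) (hq1 : q ≤ 1) (hr : 0 ≤ r) (hr1 : r ≤ 1)
    (ha : 0 ≤ a) (ha1 : a ≤ 1) (hb : 0 ≤ b) (hb1 : b ≤ 1) (ht : 0 ≤ t) (ht1 : t < 1)
    (hp : p * (1 + t) ≤ 1) (hqa : q * (a + b + 1 - t) ≤ a) (hrb : r * (a + b + 1 - t) ≤ b) :
    p * (q + r - 2 * (q * r)) + q * r ≤ 5 / 9 := by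
  set S := a + b + 1 - t
  have hS0 : 0 < S := by linarith
  have p_eliminated : (p * (q + r - 2 * (q * r)) + q * r) * (1 + t)
      ≤ q + r - (1 - t) * (q * r) := by
    have : 0 ≤ q + r - 2 * (q * r) := by nlinarith
    nlinarith
  have q_r_eliminated : (q + r - (1 - t) * (q * r)) * S ^ 2 ≤ (a + b) * S - (1 - t) * (a * b) := by
    have hq' : (q * (1 - (1 - t) * r)) * S ≤ a * (1 - (1 - t) * r) := by
      have : 0 ≤ 1 - (1 - t) * r := by nlinarith
      nlinarith
    have hr' : (r * S) * (S - (1 - t) * a) ≤ b * (S - (1 - t) * a) := by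
      have : 0 ≤ S - (1 - t) * a := by nlinarith
      nlinarith
    nlinarith
  have hpoly := majority_polynomial_le ha ha1 hb hb1 ht ht1.le
  refine le_of_mul_le_mul_right (a := (1 + t) * S ^ 2) ?_ (by positivity)
  linarith [mul_le_mul_of_nonneg_right p_eliminated (sq_nonneg S)]

lemma majority_le_of_le_half {p q r : ℝ} (hq : 0 ≤ q) (hr : 0 ≤ r) (hp2 : p ≤ 1 / 2)
    (hq2 : q ≤ 1 / 2) (hr2 : r ≤ 1 / 2) : p * (q + r - 2 * (q * r)) + q * r ≤ 5 / 9 := by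
  have : 0 ≤ q + r - 2 * (q * r) := by nlinarith
  nlinarith

lemma sq_le_prod_one_add_add (ha : 0 ≤ a) (hb : 0 ≤ b) (hc : 0 ≤ c) :
    (1 + (a + b + c)) ^ 2 ≤ (1 + b + c) * (1 + a + c) * (1 + a + b) := by
  rw [← sub_nonneg]
  ring_nf
  positivity

lemma two_mul_mul_le_prod_one_add_add (ha : 0 ≤ a) (ha1 : a ≤ 1) (hb : 0 ≤ b) (hb1 : b ≤ 1)
    (hc : 0 ≤ c) (hc1 : c ≤ 1) :
    2 * (a + b + c) * (1 + (a + b + c)) ≤ (1 + b + c) * (1 + a + c) * (1 + a + b) := by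
  have hprod : 0 ≤ (a + b + c) * (a * b * c) := by positivity
  have hcompl : 0 ≤ (1 + (a + b + c)) * ((1 - a) * (1 - b) * (1 - c)) :=
    mul_nonneg (by positivity)
      (mul_nonneg (mul_nonneg (sub_nonneg.2 ha1) (sub_nonneg.2 hb1)) (sub_nonneg.2 hc1))
  linarith

lemma three_mul_sq_le_prod_one_add_add (ha : 0 ≤ a) (ha1 : a ≤ 1) (hb : 0 ≤ b) (hb1 : b ≤ 1)
    (hc : 0 ≤ c) (hc1 : c ≤ 1) :
    3 * (a + b + c) ^ 2 ≤ (1 + b + c) * (1 + a + c) * (1 + a + b) := by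
  have hpair : 0 ≤ (a + b + c) * ((1 - a) * (1 - b) + (1 - c) * (1 - a * b)) :=
    mul_nonneg (by positivity)
      (add_nonneg (mul_nonneg (sub_nonneg.2 ha1) (sub_nonneg.2 hb1))
        (mul_nonneg (sub_nonneg.2 hc1) (sub_nonneg.2 (mul_le_one₀ ha1 hb hb1))))
  have hcompl : 0 ≤ (1 + (a + b + c)) * ((1 - a) * (1 - b) * (1 - c)) :=
    mul_nonneg (by positivity)
      (mul_nonneg (mul_nonneg (sub_nonneg.2 ha1) (sub_nonneg.2 hb1)) (sub_nonneg.2 hc1))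
  linarith

-- The three bounds on the product suffice for `a + b + c` in `[0, 1]`, `[1, 2]` and `[2, 3]`.
lemma add_mul_one_add_cube_le (ha : 0 ≤ a) (ha1 : a ≤ 1) (hb : 0 ≤ b) (hb1 : b ≤ 1) (hc : 0 ≤ c)
    (hc1 : c ≤ 1) :
    (27 + (3 - (a + b + c))) * (1 + (a + b + c)) ^ 3 ≤
      64 * ((1 + b + c) * (1 + a + c) * (1 + a + b)) := by
  have hprod₁ := sq_le_prod_one_add_add ha hb hc
  have hprod₂ := two_mul_mul_le_prod_one_add_add ha ha1 hb hb1 hc hc1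
  have hprod₃ := three_mul_sq_le_prod_one_add_add ha ha1 hb hb1 hc hc1
  obtain ⟨A, hA⟩ : ∃ A, A = a + b + c := ⟨_, rfl⟩
  have hA0 : 0 ≤ A := by rw [hA]; positivity
  have hA3 : A ≤ 3 := by linarith
  rw [← hA] at hprod₁ hprod₂ hprod₃ ⊢
  rcases le_total A 1 with hA1 | hA1
  · have hscalar : (30 - A) * (1 + A) ≤ 64 := by nlinarith
    nlinarith [mul_le_mul_of_nonneg_right hscalar (sq_nonneg (1 + A))]
  rcases le_total A 2 with hA2 | hA2
  · have hscalar : (30 - A) * (1 + A) ^ 2 ≤ 128 * A := by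
      nlinarith [mul_nonneg (sub_nonneg.2 hA1) (sub_nonneg.2 hA2)]
    linarith [mul_le_mul_of_nonneg_right hscalar (add_nonneg zero_le_one hA0)]
  · have h23 : 0 ≤ (A - 2) * (3 - A) := mul_nonneg (sub_nonneg.2 hA2) (sub_nonneg.2 hA3)
    have hscalar : (30 - A) * (1 + A) ^ 3 ≤ 192 * A ^ 2 := by
      nlinarith [mul_nonneg h23 hA0, mul_nonneg h23 (sq_nonneg A)]
    linarith

end TwoPointInequalities

namespace TwoPointLaw

variable {μ : ℝ} {P Q R : TwoPointLaw μ}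

/-- The distance of the smaller value from the mean. As the means in question are at most `1 / 4`,
the factor `4` normalises it to lie in `[0, 1]`. -/
def drop (P : TwoPointLaw μ) : ℝ := 4 * (μ - P.lo)

/-- The distance of the larger value from the mean, in the normalisation of `TwoPointLaw.drop`. -/
def rise (P : TwoPointLaw μ) : ℝ := 4 * (P.hi - μ)

lemma drop_nonneg : 0 ≤ P.drop := mul_nonneg zero_le_four (sub_nonneg.2 P.lo_le)

lemma drop_le_one (hμ : μ ≤ 1 / 4) : P.drop ≤ 1 := by
  rw [drop]
  linarith [P.lo_nonneg]

lemma rise_pos : 0 < P.rise := mul_pos zero_lt_four (sub_pos.2 P.lt_hi)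

lemma prob_mul_drop_add_rise : P.prob * (P.drop + P.rise) = P.drop := by
  rw [drop, rise]
  linear_combination 4 * P.prob_mul_sub

lemma prob_mul_le {t : ℝ} (ht : t ≤ P.drop + P.rise) : P.prob * t ≤ P.drop :=
  (mul_le_mul_of_nonneg_left ht P.prob_nonneg).trans_eq prob_mul_drop_add_rise

lemma prob_mul_one_add_rise_le (hμ : μ ≤ 1 / 4) : P.prob * (1 + P.rise) ≤ 1 := by
  nlinarith [P.prob_mul_drop_add_rise, P.prob_le_one, P.drop_le_one hμ]

lemma prob_le_half (hμ : μ ≤ 1 / 4) (h : 1 ≤ P.rise) : P.prob ≤ 1 / 2 := by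
  nlinarith [P.prob_mul_one_add_rise_le hμ, P.prob_nonneg]

lemma one_add_drop_add_drop_le_rise (hμ : μ ≤ 1 / 4) (h : 1 ≤ P.hi + Q.lo + R.lo) :
    1 + Q.drop + R.drop ≤ P.rise := by
  rw [drop, drop, rise]
  linarith

lemma one_add_drop_le_rise_add_rise (hμ : μ ≤ 1 / 4) (h : 1 ≤ P.hi + Q.hi + R.lo) :
    1 + R.drop ≤ P.rise + Q.rise := by
  rw [drop, rise, rise]
  linarith

lemma one_le_rise_add_rise_add_rise (hμ : μ ≤ 1 / 4) (h : 1 ≤ P.hi + Q.hi + R.hi) :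
    1 ≤ P.rise + Q.rise + R.rise := by
  rw [rise, rise, rise]
  linarith

lemma prob_mul_prob_le_half (hμ : μ ≤ 1 / 4) (h : 1 ≤ P.rise + Q.rise) :
    P.prob * Q.prob ≤ 1 / 2 := by
  have hprod := mul_le_mul (P.prob_mul_one_add_rise_le hμ) (Q.prob_mul_one_add_rise_le hμ)
    (mul_nonneg Q.prob_nonneg (by linarith [Q.rise_pos])) zero_le_one
  nlinarith [mul_pos P.rise_pos Q.rise_pos, mul_nonneg P.prob_nonneg Q.prob_nonneg]

lemma prob_mul_prob_mul_prob_le_half (hμ : μ ≤ 1 / 4) (h : 1 ≤ P.rise + Q.rise + R.rise) :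
    P.prob * Q.prob * R.prob ≤ 1 / 2 := by
  have hP := P.rise_pos
  have hQ := Q.rise_pos
  have hR := R.rise_pos
  have hprod := mul_le_mul (mul_le_mul (P.prob_mul_one_add_rise_le hμ)
    (Q.prob_mul_one_add_rise_le hμ) (mul_nonneg Q.prob_nonneg (by linarith)) zero_le_one)
    (R.prob_mul_one_add_rise_le hμ) (mul_nonneg R.prob_nonneg (by linarith)) (by norm_num)
  have hrise : 2 ≤ (1 + P.rise) * (1 + Q.rise) * (1 + R.rise) := by
    have : 0 < P.rise * Q.rise + P.rise * R.rise + Q.rise * R.rise + P.rise * Q.rise * R.rise := by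
      positivity
    linarith
  linarith [mul_le_mul_of_nonneg_left hrise
    (mul_nonneg (mul_nonneg P.prob_nonneg Q.prob_nonneg) R.prob_nonneg)]

lemma four_ninths_le_of_singles (hμ : μ ≤ 1 / 4) (hQ : 1 ≤ P.lo + Q.hi + R.lo)
    (hR : 1 ≤ P.lo + Q.lo + R.hi) : 4 / 9 ≤ (1 - Q.prob) * (1 - R.prob) := by
  have hQ' : 1 + P.drop + R.drop ≤ Q.rise := one_add_drop_add_drop_le_rise hμ (by linarith)
  have hR' : 1 + P.drop + Q.drop ≤ R.rise := one_add_drop_add_drop_le_rise hμ (by linarith)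
  exact four_ninths_le_one_sub_mul_one_sub Q.drop_nonneg (Q.drop_le_one hμ) R.drop_nonneg
    (R.drop_le_one hμ) (prob_mul_le (by linarith [P.drop_nonneg]))
    (prob_mul_le (by linarith [P.drop_nonneg]))

lemma prob_mul_prob_mul_le (hPQ : P.drop ≤ Q.drop) (hR : 1 + R.drop ≤ P.rise + Q.rise) :
    P.prob * Q.prob * (1 + Q.drop + R.drop) ≤ Q.drop := by
  have hP : P.prob * P.rise ≤ (1 - P.prob) * Q.drop :=
    calc P.prob * P.rise = (1 - P.prob) * P.drop := by linarith [P.prob_mul_drop_add_rise]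
      _ ≤ (1 - P.prob) * Q.drop := mul_le_mul_of_nonneg_left hPQ (sub_nonneg.2 P.prob_le_one)
  calc P.prob * Q.prob * (1 + Q.drop + R.drop)
      ≤ P.prob * Q.prob * (P.rise + (Q.drop + Q.rise)) :=
        mul_le_mul_of_nonneg_left (by linarith) (mul_nonneg P.prob_nonneg Q.prob_nonneg)
    _ = Q.prob * (P.prob * P.rise) + P.prob * Q.drop := by
        rw [mul_add, mul_assoc P.prob Q.prob (Q.drop + Q.rise), Q.prob_mul_drop_add_rise]
        ring
    _ ≤ Q.prob * ((1 - P.prob) * Q.drop) + P.prob * Q.drop := by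
        gcongr
        exact Q.prob_nonneg
    _ ≤ 1 * ((1 - P.prob) * Q.drop) + P.prob * Q.drop := by
        gcongr
        · exact mul_nonneg (sub_nonneg.2 P.prob_le_one) Q.drop_nonneg
        · exact Q.prob_le_one
    _ = Q.drop := by ring

lemma four_ninths_le_of_double_of_single (hμ : μ ≤ 1 / 4) (hPQ : 1 ≤ P.hi + Q.hi + R.lo)
    (hR : 1 ≤ P.lo + Q.lo + R.hi) : 4 / 9 ≤ (1 - P.prob * Q.prob) * (1 - R.prob) := by
  have hPQ' := one_add_drop_le_rise_add_rise hμ hPQ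
  have hR' : 1 + P.drop + Q.drop ≤ R.rise := one_add_drop_add_drop_le_rise hμ (by linarith)
  rcases le_total P.drop Q.drop with h | h
  · exact four_ninths_le_one_sub_mul_one_sub Q.drop_nonneg (Q.drop_le_one hμ) R.drop_nonneg
      (R.drop_le_one hμ) (prob_mul_prob_mul_le h hPQ') (prob_mul_le (by linarith [P.drop_nonneg]))
  · rw [mul_comm P.prob]
    exact four_ninths_le_one_sub_mul_one_sub P.drop_nonneg (P.drop_le_one hμ) R.drop_nonneg
      (R.drop_le_one hμ) (prob_mul_prob_mul_le h (by linarith))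
      (prob_mul_le (by linarith [Q.drop_nonneg]))

lemma majority_le_of_rise_lt_one (hμ : μ ≤ 1 / 4) (hPQ : 1 ≤ P.hi + Q.hi + R.lo)
    (hPR : 1 ≤ P.hi + Q.lo + R.hi) (hP : P.rise < 1) :
    P.prob * (Q.prob + R.prob - 2 * (Q.prob * R.prob)) + Q.prob * R.prob ≤ 5 / 9 := by
  have hPQ' := one_add_drop_le_rise_add_rise hμ hPQ
  have hPR' : 1 + Q.drop ≤ P.rise + R.rise := one_add_drop_le_rise_add_rise hμ (by linarith)
  exact majority_le_of_mul_le Q.prob_nonneg Q.prob_le_one R.prob_nonneg R.prob_le_one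
    Q.drop_nonneg (Q.drop_le_one hμ) R.drop_nonneg (R.drop_le_one hμ) P.rise_pos.le hP
    (P.prob_mul_one_add_rise_le hμ) (prob_mul_le (by linarith)) (prob_mul_le (by linarith))

lemma majority_le (hμ : μ ≤ 1 / 4) (hPQ : 1 ≤ P.hi + Q.hi + R.lo) (hPR : 1 ≤ P.hi + Q.lo + R.hi)
    (hQR : 1 ≤ P.lo + Q.hi + R.hi) :
    P.prob * (Q.prob + R.prob - 2 * (Q.prob * R.prob)) + Q.prob * R.prob ≤ 5 / 9 := by
  rcases lt_or_ge P.rise 1 with hP | hP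
  · exact majority_le_of_rise_lt_one hμ hPQ hPR hP
  rcases lt_or_ge Q.rise 1 with hQ | hQ
  · linarith [majority_le_of_rise_lt_one (P := Q) (Q := P) (R := R) hμ (by linarith)
      (by linarith) hQ]
  rcases lt_or_ge R.rise 1 with hR | hR
  · linarith [majority_le_of_rise_lt_one (P := R) (Q := P) (R := Q) hμ (by linarith)
      (by linarith) hR]
  exact majority_le_of_le_half Q.prob_nonneg R.prob_nonneg (prob_le_half hμ hP)
    (prob_le_half hμ hQ) (prob_le_half hμ hR)

lemma one_sub_prob_prod_ge (hμ : μ ≤ 1 / 4) (hP : 1 ≤ P.hi + Q.lo + R.lo)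
    (hQ : 1 ≤ P.lo + Q.hi + R.lo) (hR : 1 ≤ P.lo + Q.lo + R.hi) :
    (27 + 4 * (P.lo + Q.lo + R.lo)) / 64 ≤ (1 - P.prob) * (1 - Q.prob) * (1 - R.prob) := by
  have hpoly := add_mul_one_add_cube_le P.drop_nonneg (P.drop_le_one hμ) Q.drop_nonneg
    (Q.drop_le_one hμ) R.drop_nonneg (R.drop_le_one hμ)
  have hlo : 4 * (P.lo + Q.lo + R.lo) ≤ 3 - (P.drop + Q.drop + R.drop) := by
    rw [drop, drop, drop]
    linarith
  obtain ⟨S, hS⟩ : ∃ S, S = 1 + (P.drop + Q.drop + R.drop) := ⟨_, rfl⟩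
  have hdP := P.drop_nonneg
  have hdQ := Q.drop_nonneg
  have hdR := R.drop_nonneg
  have hS0 : 0 < S := by rw [hS]; positivity
  have fP : 1 + Q.drop + R.drop ≤ (1 - P.prob) * S := by
    linarith [prob_mul_le (P := P) (t := S) (by linarith [one_add_drop_add_drop_le_rise hμ hP])]
  have fQ : 1 + P.drop + R.drop ≤ (1 - Q.prob) * S := by
    linarith [prob_mul_le (P := Q) (t := S) (by
      linarith [one_add_drop_add_drop_le_rise (P := Q) (Q := P) (R := R) hμ (by linarith)])]
  have fR : 1 + P.drop + Q.drop ≤ (1 - R.prob) * S := by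
    linarith [prob_mul_le (P := R) (t := S) (by
      linarith [one_add_drop_add_drop_le_rise (P := R) (Q := P) (R := Q) hμ (by linarith)])]
  have fPQ := mul_le_mul fP fQ (by positivity) (le_trans (by positivity) fP)
  have fPQR := mul_le_mul fPQ fR (by positivity) (le_trans (by positivity) fPQ)
  refine le_of_mul_le_mul_right (a := S ^ 3) ?_ (by positivity)
  rw [← hS] at hpoly
  linarith [mul_le_mul_of_nonneg_right hlo (pow_pos hS0 3).le]

end TwoPointLaw

/-- The indicator of `1 ≤ x + y + z`. -/
noncomputable def heavy (x y z : ℝ) : ℝ := if 1 ≤ x + y + z then 1 else 0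

lemma heavy_eq_zero {x y z : ℝ} (h : x + y + z < 1) : heavy x y z = 0 := if_neg (not_le.2 h)

lemma heavy_nonneg (x y z : ℝ) : 0 ≤ heavy x y z := ite_nonneg zero_le_one le_rfl

lemma heavy_le_one (x y z : ℝ) : heavy x y z ≤ 1 := ite_le_one le_rfl zero_le_one

/-- The indicator of `1 ≤ x + y + z`, increased by `(1 - τ) / 16` where `x`, `y` and `z` are all
below `τ`. -/
noncomputable def bonusHeavy (τ x y z : ℝ) : ℝ :=
  if x < τ ∧ y < τ ∧ z < τ then (1 + (1 - τ) / 16) * heavy x y z else heavy x y z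

section bonusHeavy

variable {τ : ℝ} (x y z : ℝ)

lemma bonusHeavy_le_mul_heavy (hτ : τ ≤ 1) :
    bonusHeavy τ x y z ≤ (1 + (1 - τ) / 16) * heavy x y z := by
  rw [bonusHeavy]
  split_ifs
  · rfl
  · exact le_mul_of_one_le_left (heavy_nonneg _ _ _) (by linarith)

lemma bonusHeavy_le (hτ : τ ≤ 1) : bonusHeavy τ x y z ≤ 1 + (1 - τ) / 16 :=
  (bonusHeavy_le_mul_heavy x y z hτ).trans
    (mul_le_of_le_one_right (by linarith) (heavy_le_one _ _ _))

lemma bonusHeavy_nonneg (hτ : τ ≤ 1) : 0 ≤ bonusHeavy τ x y z := by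
  rw [bonusHeavy]
  split_ifs
  · exact mul_nonneg (by linarith) (heavy_nonneg _ _ _)
  · exact heavy_nonneg _ _ _

variable {x y z} in
lemma bonusHeavy_le_one (h : ¬(x < τ ∧ y < τ ∧ z < τ)) : bonusHeavy τ x y z ≤ 1 :=
  (if_neg h).trans_le (heavy_le_one _ _ _)

end bonusHeavy

namespace TwoPointLaw

variable {μ : ℝ} {P Q R : TwoPointLaw μ}

section ConditionalBounds

variable {x y : ℝ}

lemma expect_heavy_le_one : R.expect (heavy x y) ≤ 1 := expect_le_of_forall_le (heavy_le_one x y)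

lemma expect_heavy_le_prob (h : x + y + R.lo < 1) : R.expect (heavy x y) ≤ R.prob :=
  (expect_le (heavy_eq_zero h).le (heavy_le_one _ _ _)).trans_eq (by ring)

lemma expect_heavy_nonpos (h : x + y + R.hi < 1) : R.expect (heavy x y) ≤ 0 :=
  (expect_le (heavy_eq_zero (by linarith [R.lo_lt_hi])).le (heavy_eq_zero h).le).trans_eq (by ring)

lemma expect_expect_heavy_le_union (h : x + Q.lo + R.lo < 1) :
    Q.expect (fun y => R.expect (heavy x y)) ≤ 1 - (1 - Q.prob) * (1 - R.prob) :=
  (expect_le (expect_heavy_le_prob h) expect_heavy_le_one).trans_eq (by ring)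

lemma expect_expect_heavy_le_prob (h : x + Q.hi + R.lo < 1) :
    Q.expect (fun y => R.expect (heavy x y)) ≤ R.prob :=
  (expect_le (expect_heavy_le_prob (by linarith [Q.lo_lt_hi]))
    (expect_heavy_le_prob h)).trans_eq (by ring)

lemma expect_expect_heavy_le_inter (hQ : x + Q.hi + R.lo < 1) (hR : x + Q.lo + R.hi < 1) :
    Q.expect (fun y => R.expect (heavy x y)) ≤ Q.prob * R.prob :=
  (expect_le (expect_heavy_nonpos hR) (expect_heavy_le_prob hQ)).trans_eq (by ring)

lemma expect_expect_heavy_nonpos (h : x + Q.hi + R.hi < 1) :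
    Q.expect (fun y => R.expect (heavy x y)) ≤ 0 :=
  (expect_le (expect_heavy_nonpos (by linarith [Q.lo_lt_hi]))
    (expect_heavy_nonpos h)).trans_eq (by ring)

end ConditionalBounds

lemma expect₃_heavy_swap_left : P.expect₃ Q R heavy = Q.expect₃ P R heavy := by
  simp only [expect₃, P.expect_comm Q, heavy, add_comm, add_left_comm]

lemma expect₃_heavy_swap_right : P.expect₃ Q R heavy = P.expect₃ R Q heavy := by
  simp only [expect₃, Q.expect_comm R, heavy, add_comm, add_left_comm]

lemma expect₃_heavy_le_of_singles_fail (hμ : μ ≤ 1 / 4) (hPQ : P.hi - P.lo ≤ Q.hi - Q.lo)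
    (hQR : Q.hi - Q.lo ≤ R.hi - R.lo) (hR : P.lo + Q.lo + R.hi < 1) :
    P.expect₃ Q R heavy ≤ 5 / 9 := by
  have := P.lo_lt_hi
  have inter := expect_expect_heavy_le_inter (x := P.lo) (Q := Q) (R := R) (by linarith) hR
  rcases lt_or_ge (P.hi + Q.lo + R.hi) 1 with dPR | dPR
  · rcases lt_or_ge (P.lo + Q.hi + R.hi) 1 with dQR | dQR
    · have nonpos := expect_expect_heavy_nonpos dQR
      rcases lt_or_ge (P.hi + Q.hi + R.hi) 1 with t | t
      · exact (expect_le nonpos (expect_expect_heavy_nonpos t)).trans (by linarith)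
      · refine (expect_le nonpos (expect_expect_heavy_le_inter (by linarith) dPR)).trans ?_
        linarith [prob_mul_prob_mul_prob_le_half hμ (one_le_rise_add_rise_add_rise hμ t)]
    · refine (expect_le inter (expect_expect_heavy_le_inter (by linarith) dPR)).trans ?_
      have : 1 + P.drop ≤ Q.rise + R.rise := one_add_drop_le_rise_add_rise hμ (by linarith)
      linarith [prob_mul_prob_le_half (P := Q) (Q := R) hμ (by linarith [P.drop_nonneg])]
  rcases lt_or_ge (P.hi + Q.hi + R.lo) 1 with dPQ | dPQ
  · refine (expect_le inter (expect_expect_heavy_le_prob dPQ)).trans ?_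
    rcases lt_or_ge R.rise 1 with hR1 | hR1
    · have := majority_le_of_rise_lt_one (P := R) (Q := P) (R := Q) hμ (by linarith)
        (by linarith) hR1
      nlinarith [mul_nonneg (mul_nonneg P.prob_nonneg Q.prob_nonneg)
        (sub_nonneg.2 R.prob_le_one)]
    · nlinarith [prob_le_half hμ hR1, R.prob_nonneg, mul_nonneg R.prob_nonneg
        (mul_nonneg (sub_nonneg.2 P.prob_le_one) (sub_nonneg.2 Q.prob_le_one))]
  · refine (expect_le inter (expect_expect_heavy_le_union (by linarith))).trans ?_
    linarith [majority_le hμ dPQ dPR (by linarith)]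

lemma expect₃_heavy_le_of_sorted (hμ : μ ≤ 1 / 4) (hPQ : P.hi - P.lo ≤ Q.hi - Q.lo)
    (hQR : Q.hi - Q.lo ≤ R.hi - R.lo) (hP : P.hi + Q.lo + R.lo < 1) :
    P.expect₃ Q R heavy ≤ 5 / 9 := by
  have hlo := P.lo_lt_hi
  rcases lt_or_ge (P.lo + Q.lo + R.hi) 1 with sR | sR
  · exact expect₃_heavy_le_of_singles_fail hμ hPQ hQR sR
  have hunion := expect_expect_heavy_le_union (x := P.hi) (Q := Q) (R := R) hP
  rcases lt_or_ge (P.lo + Q.hi + R.lo) 1 with sQ | sQ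
  · rcases lt_or_ge (P.hi + Q.hi + R.lo) 1 with dPQ | dPQ
    · refine (expect_le (expect_expect_heavy_le_prob sQ)
        (expect_expect_heavy_le_prob dPQ)).trans ?_
      have : 1 + P.drop + Q.drop ≤ R.rise := one_add_drop_add_drop_le_rise hμ (by linarith)
      linarith [R.prob_le_half hμ (by linarith [P.drop_nonneg, Q.drop_nonneg])]
    · refine (expect_le (expect_expect_heavy_le_prob sQ) hunion).trans ?_
      linarith [four_ninths_le_of_double_of_single hμ dPQ sR]
  · refine (expect_le (expect_expect_heavy_le_union (by linarith)) hunion).trans ?_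
    linarith [four_ninths_le_of_singles hμ sQ sR]

lemma expect₃_heavy_le_of_single_fails (hμ : μ ≤ 1 / 4) (hP : P.hi + Q.lo + R.lo < 1) :
    P.expect₃ Q R heavy ≤ 5 / 9 := by
  wlog hQR : Q.hi - Q.lo ≤ R.hi - R.lo generalizing Q R
  · rw [expect₃_heavy_swap_right]
    exact this (by linarith) (by linarith)
  rcases le_total (P.hi - P.lo) (Q.hi - Q.lo) with hPQ | hQP
  · exact expect₃_heavy_le_of_sorted hμ hPQ hQR hP
  rw [expect₃_heavy_swap_left]
  rcases le_total (P.hi - P.lo) (R.hi - R.lo) with hPR | hRP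
  · exact expect₃_heavy_le_of_sorted hμ hQP hPR (by linarith)
  · rw [expect₃_heavy_swap_right]
    exact expect₃_heavy_le_of_sorted hμ hQR hRP (by linarith)

lemma expect₃_heavy_le (hμ : μ ≤ 1 / 4)
    (h : ¬(1 ≤ P.hi + Q.lo + R.lo ∧ 1 ≤ P.lo + Q.hi + R.lo ∧ 1 ≤ P.lo + Q.lo + R.hi)) :
    P.expect₃ Q R heavy ≤ 5 / 9 := by
  rcases lt_or_ge (P.hi + Q.lo + R.lo) 1 with hP | hP
  · exact expect₃_heavy_le_of_single_fails hμ hP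
  rcases lt_or_ge (P.lo + Q.hi + R.lo) 1 with hQ | hQ
  · rw [expect₃_heavy_swap_left]
    exact expect₃_heavy_le_of_single_fails hμ (by linarith)
  have hR : P.lo + Q.lo + R.hi < 1 := lt_of_not_ge fun hR => h ⟨hP, hQ, hR⟩
  rw [expect₃_heavy_swap_right, expect₃_heavy_swap_left]
  exact expect₃_heavy_le_of_single_fails hμ (by linarith)

lemma expect₃_le_of_lo_nonpos {w : ℝ → ℝ → ℝ → ℝ} {c : ℝ} (h₀ : w P.lo Q.lo R.lo ≤ 0)
    (hP : ∀ y z, w P.hi y z ≤ c) (hQ : ∀ x z, w x Q.hi z ≤ c) (hR : ∀ x y, w x y R.hi ≤ c) :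
    P.expect₃ Q R w ≤ c * (1 - (1 - P.prob) * (1 - Q.prob) * (1 - R.prob)) :=
  (expect_le (expect_le (expect_le h₀ (hR _ _)) (expect_le_of_forall_le (hQ _)))
    (expect_le_of_forall_le fun y => expect_le_of_forall_le (hP y))).trans_eq (by ring)

lemma expect₃_const_mul (c : ℝ) (w : ℝ → ℝ → ℝ → ℝ) :
    P.expect₃ Q R (fun x y z => c * w x y z) = c * P.expect₃ Q R w := by
  simp only [expect₃, expect_const_mul]

lemma expect₃_mono {v w : ℝ → ℝ → ℝ → ℝ} (h : ∀ x y z, v x y z ≤ w x y z) :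
    P.expect₃ Q R v ≤ P.expect₃ Q R w :=
  P.expect_mono fun x => Q.expect_mono fun y => R.expect_mono (h x y)

lemma expect₃_bonusHeavy_le_of_singles {τ : ℝ} (hτ : τ ≤ 1) (hμ : μ ≤ 1 / 4)
    (hP : 1 ≤ P.hi + Q.lo + R.lo) (hQ : 1 ≤ P.lo + Q.hi + R.lo) (hR : 1 ≤ P.lo + Q.lo + R.hi) :
    P.expect₃ Q R (bonusHeavy τ) ≤ 37 / 64 := by
  have hprod := one_sub_prob_prod_ge hμ hP hQ hR
  have hlo : bonusHeavy τ P.lo Q.lo R.lo ≤ 0 := by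
    refine (bonusHeavy_le_mul_heavy _ _ _ hτ).trans_eq ?_
    rw [heavy_eq_zero (by linarith [P.lo_le, Q.lo_le, R.lo_le]), mul_zero]
  by_cases hhi : τ ≤ P.hi ∧ τ ≤ Q.hi ∧ τ ≤ R.hi
  · have hle := expect₃_le_of_lo_nonpos (c := 1) hlo
      (fun y z => bonusHeavy_le_one fun h => hhi.1.not_gt h.1)
      (fun x z => bonusHeavy_le_one fun h => hhi.2.1.not_gt h.2.1)
      (fun x y => bonusHeavy_le_one fun h => hhi.2.2.not_gt h.2.2)
    linarith [P.lo_nonneg, Q.lo_nonneg, R.lo_nonneg]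
  · have hgap : 1 - τ ≤ P.lo + Q.lo + R.lo := by
      by_contra h
      have := P.lo_nonneg
      have := Q.lo_nonneg
      have := R.lo_nonneg
      exact hhi ⟨by linarith, by linarith, by linarith⟩
    have hle := expect₃_le_of_lo_nonpos hlo (fun y z => bonusHeavy_le _ y z hτ)
      (fun x z => bonusHeavy_le x _ z hτ) (fun x y => bonusHeavy_le x y _ hτ)
    nlinarith

-- `5 / 9 * (1 + (1 - 7 / 20) / 16) = 37 / 64`, whence the restriction on `τ`.
lemma expect₃_bonusHeavy_le {τ : ℝ} (hτ₀ : 7 / 20 ≤ τ) (hτ : τ ≤ 1) (hμ : μ ≤ 1 / 4) :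
    P.expect₃ Q R (bonusHeavy τ) ≤ 37 / 64 := by
  by_cases h : 1 ≤ P.hi + Q.lo + R.lo ∧ 1 ≤ P.lo + Q.hi + R.lo ∧ 1 ≤ P.lo + Q.lo + R.hi
  · exact expect₃_bonusHeavy_le_of_singles hτ hμ h.1 h.2.1 h.2.2
  · calc P.expect₃ Q R (bonusHeavy τ)
        ≤ P.expect₃ Q R (fun x y z => (1 + (1 - τ) / 16) * heavy x y z) :=
          expect₃_mono fun x y z => bonusHeavy_le_mul_heavy x y z hτ
      _ = (1 + (1 - τ) / 16) * P.expect₃ Q R heavy := expect₃_const_mul _ _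
      _ ≤ (1 + (1 - τ) / 16) * (5 / 9) :=
          mul_le_mul_of_nonneg_left (expect₃_heavy_le hμ h) (by linarith)
      _ ≤ 37 / 64 := by linarith

end TwoPointLaw

/-! ### Fractional vertex covers of stable 3-graphs -/

section LinearProgramming

open Matrix

lemma exists_isSaddlePointOn_of_bilinear {E F : Type*} [TopologicalSpace E] [AddCommGroup E]
    [Module ℝ E] [IsTopologicalAddGroup E] [ContinuousSMul ℝ E] [T2Space E] [FiniteDimensional ℝ E]
    [TopologicalSpace F] [AddCommGroup F] [Module ℝ F] [IsTopologicalAddGroup F]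
    [ContinuousSMul ℝ F] [T2Space F] [FiniteDimensional ℝ F] (B : E →ₗ[ℝ] F →ₗ[ℝ] ℝ)
    {X : Set E} (hX : X.Nonempty) (cX : Convex ℝ X) (kX : IsCompact X)
    {Y : Set F} (hY : Y.Nonempty) (cY : Convex ℝ Y) (kY : IsCompact Y) :
    ∃ a ∈ X, ∃ b ∈ Y, IsSaddlePointOn X Y (fun x y => B x y) a b :=
  Sion.exists_isSaddlePointOn hX cX kX
    (fun y _ =>
      (B.flip y).continuous_of_finiteDimensional.lowerSemicontinuous.lowerSemicontinuousOn _)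
    (fun y _ => ((B.flip y).convexOn cX).quasiconvexOn) cY hY kY
    (fun x _ => (B x).continuous_of_finiteDimensional.upperSemicontinuous.upperSemicontinuousOn _)
    (fun x _ => ((B x).concaveOn cY).quasiconcaveOn)

variable {κ π : Type*} [Fintype κ] [Fintype π] [Nonempty κ] (A : Matrix π κ ℝ)

lemma exists_le_mulVec_or_exists_vecMul_le (c : ℝ) :
    (∃ f ∈ stdSimplex ℝ κ, ∀ p, c ≤ (A *ᵥ f) p) ∨ ∃ y ∈ stdSimplex ℝ π, ∀ k, (y ᵥ* A) k ≤ c := by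
  classical
  rcases isEmpty_or_nonempty π
  · exact Or.inl ⟨_, single_mem_stdSimplex ℝ (Classical.arbitrary κ), isEmptyElim⟩
  obtain ⟨y, hy, f, hf, hyf⟩ := exists_isSaddlePointOn_of_bilinear (toLinearMap₂' ℝ A)
    (isPathConnected_stdSimplex π).nonempty (convex_stdSimplex ℝ π) (isCompact_stdSimplex ℝ π)
    (isPathConnected_stdSimplex κ).nonempty (convex_stdSimplex ℝ κ) (isCompact_stdSimplex ℝ κ)
  have hle : ∀ p k, (y ᵥ* A) k ≤ (A *ᵥ f) p := fun p k => by
    simpa [toLinearMap₂'_apply', ← vecMul_apply] using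
      hyf _ (single_mem_stdSimplex ℝ p) _ (single_mem_stdSimplex ℝ k)
  by_cases hc : ∀ p, c ≤ (A *ᵥ f) p
  · exact Or.inl ⟨f, hf, hc⟩
  · push Not at hc
    obtain ⟨p, hp⟩ := hc
    exact Or.inr ⟨y, hy, fun k => (hle p k).trans hp.le⟩

lemma exists_covering_or_exists_packing {V : ℝ} (hV : 0 < V) :
    (∃ f : κ → ℝ, 0 ≤ f ∧ ∑ k, f k = V ∧ 1 ≤ A *ᵥ f) ∨
      ∃ y : π → ℝ, 0 ≤ y ∧ ∑ p, y p = V ∧ y ᵥ* A ≤ 1 := by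
  rcases exists_le_mulVec_or_exists_vecMul_le A (1 / V) with ⟨f, hf, h⟩ | ⟨y, hy, h⟩
  · refine Or.inl ⟨V • f, smul_nonneg hV.le hf.1, by simp [← Finset.mul_sum, hf.2], fun p => ?_⟩
    simpa [mulVec_smul] using (div_le_iff₀' hV).1 (h p)
  · refine Or.inr ⟨V • y, smul_nonneg hV.le hy.1, by simp [← Finset.mul_sum, hy.2], fun k => ?_⟩
    simpa [smul_vecMul] using (le_div_iff₀' hV).1 (h k)

end LinearProgramming

section Matching

lemma exists_injective_prodMk_of_card_fiber_le {S κ : Type*} [Fintype S] [DecidableEq κ]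
    {c : S → κ} {L : ℕ} (h : ∀ k, (Finset.univ.filter fun s => c s = k).card ≤ L) :
    ∃ l : S → Fin L, Function.Injective fun s => (c s, l s) := by
  have emb : ∀ k, Nonempty ({s // c s = k} ↪ Fin L) := fun k =>
    Function.Embedding.nonempty_of_card_le (by simpa [Fintype.card_subtype] using h k)
  have hinj : Function.Injective
      (Equiv.sigmaEquivProd κ (Fin L) ∘ Sigma.map id (fun k => (emb k).some) ∘
        (Equiv.sigmaFiberEquiv c).symm) :=
    (Equiv.injective _).comp ((Function.injective_id.sigma_map fun k =>
      (emb k).some.injective).comp (Equiv.injective _))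
  exact ⟨fun s => (emb (c s)).some ⟨s, rfl⟩, hinj⟩

lemma exists_matching_of_injective_uncurry {ι κ α : Type*} [Fintype ι] [Fintype κ] [Nonempty κ]
    [DecidableEq α] {H : Finset (Finset α)} {v : ι → κ → α}
    (hv : Function.Injective (Function.uncurry v)) (hH : ∀ i, Finset.univ.image (v i) ∈ H) :
    ∃ M ⊆ H, (M : Set (Finset α)).Pairwise Disjoint ∧ M.card = Fintype.card ι := by
  classical
  have hdisj : Pairwise (Function.onFun Disjoint fun i => Finset.univ.image (v i)) := by
    intro i i' hne
    simp only [Function.onFun, Finset.disjoint_left, Finset.mem_image, Finset.mem_univ, true_and]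
    rintro _ ⟨j, rfl⟩ ⟨j', h⟩
    exact hne (congrArg Prod.fst (@hv (i', j') (i, j) h)).symm
  have hinj : Function.Injective fun i => Finset.univ.image (v i) :=
    fun i i' h => by_contra fun hne => by
      simpa [Function.onFun, h, Finset.univ_nonempty.ne_empty] using hdisj hne
  refine ⟨Finset.univ.image fun i => Finset.univ.image (v i), ?_, ?_, ?_⟩
  · simpa [Finset.image_subset_iff] using hH
  · rw [Finset.coe_image, Finset.coe_univ, Set.image_univ]
    exact hdisj.range_pairwise
  · rw [Finset.card_image_of_injective _ hinj, Finset.card_univ]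

/-- All triples of distinct vertices whose blocks of length `L` are prescribed by `p` lie
in `H`. -/
def IsFullPattern {n : ℕ} (H : Finset (Finset (Fin n))) (L : ℕ) (p : Fin 3 → ℕ) : Prop :=
  ∀ v : Fin 3 → Fin n, Function.Injective v → (∀ j, (v j : ℕ) / L = p j) → Finset.univ.image v ∈ H

variable {n K L : ℕ} {H : Finset (Finset (Fin n))}

lemma exists_matching_of_isFullPattern {ι : Type*} [Fintype ι] (hKL : K * L ≤ n)
    {p : ι → Fin 3 → Fin K} (hfull : ∀ i, IsFullPattern H L fun j => p i j)
    (hcap : ∀ k, (Finset.univ.filter fun s : ι × Fin 3 => p s.1 s.2 = k).card ≤ L) :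
    ∃ M ⊆ H, (M : Set (Finset (Fin n))).Pairwise Disjoint ∧ M.card = Fintype.card ι := by
  obtain ⟨l, hl⟩ := exists_injective_prodMk_of_card_fiber_le hcap
  let v : ι → Fin 3 → Fin n := fun i j => Fin.castLE hKL (finProdFinEquiv (p i j, l (i, j)))
  have hv : Function.Injective (Function.uncurry v) :=
    (Fin.castLE_injective hKL).comp (finProdFinEquiv.injective.comp hl)
  have hblock : ∀ i j, (v i j : ℕ) / L = p i j := fun i j => by
    simp [v, Nat.add_mul_div_left _ _ (l (i, j)).pos]
  exact exists_matching_of_injective_uncurry hv fun i => hfull i (v i)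
    (hv.comp (Prod.mk_right_injective i)) (hblock i)

/-- The full patterns on the first `K` blocks. -/
abbrev FullPattern (H : Finset (Finset (Fin n))) (K L : ℕ) : Type :=
  {p : Fin 3 → Fin K // IsFullPattern H L fun j => p j}

noncomputable instance : Fintype (FullPattern H K L) := Fintype.ofFinite _

/-- The entry at `(p, k)` is the number of vertices in block `k` of any triple of pattern `p`. -/
def patternIncidence (H : Finset (Finset (Fin n))) (K L : ℕ) :
    Matrix (FullPattern H K L) (Fin K) ℝ :=
  Matrix.of fun p k => ((Finset.univ.filter fun j => p.1 j = k).card : ℝ)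

lemma patternIncidence_mulVec (f : Fin K → ℝ) (p : FullPattern H K L) :
    (patternIncidence H K L).mulVec f p = ∑ j, f (p.1 j) := by
  rw [← Finset.sum_fiberwise' Finset.univ p.1 f]
  simp [Matrix.mulVec, dotProduct, patternIncidence]

lemma exists_matching_of_fractional_matching (hKL : K * L ≤ n) {y : FullPattern H K L → ℝ}
    (hy : 0 ≤ y) (hcap : Matrix.vecMul y (patternIncidence H K L) ≤ 1) :
    ∃ M ⊆ H, (M : Set (Finset (Fin n))).Pairwise Disjoint ∧
      L * ∑ p, y p - K ^ 3 ≤ (M.card : ℝ) := by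
  classical
  let N : FullPattern H K L → ℕ := fun p => ⌊L * y p⌋₊
  have hN : ∀ p, (N p : ℝ) ≤ L * y p := fun p =>
    Nat.floor_le (mul_nonneg (Nat.cast_nonneg _) (hy p))
  obtain ⟨M, hMH, hM, hcard⟩ := exists_matching_of_isFullPattern (ι := Σ p, Fin (N p)) hKL
    (p := fun i => i.1.1) (fun i => i.1.2) fun k => by
      have hcapk : ∑ p, (N p : ℝ) * patternIncidence H K L p k ≤ L :=
        calc ∑ p, (N p : ℝ) * patternIncidence H K L p k
            ≤ ∑ p, L * y p * patternIncidence H K L p k :=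
              Finset.sum_le_sum fun p _ => mul_le_mul_of_nonneg_right (hN p) (Nat.cast_nonneg _)
          _ = L * Matrix.vecMul y (patternIncidence H K L) k := by
              simp only [mul_assoc, ← Finset.mul_sum]; rfl
          _ ≤ L := mul_le_of_le_one_right (Nat.cast_nonneg _) (hcap k)
      have hfiber : (Finset.univ.filter fun s : (Σ p, Fin (N p)) × Fin 3 => s.1.1.1 s.2 = k).card
          = ∑ p, N p * (Finset.univ.filter fun j => p.1 j = k).card := by
        simp only [Finset.card_filter, Fintype.sum_prod_type, Fintype.sum_sigma]
        simp
      rw [hfiber, ← Nat.cast_le (α := ℝ)]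
      simpa [patternIncidence] using hcapk
  refine ⟨M, hMH, hM, ?_⟩
  have hcount : (Fintype.card (FullPattern H K L) : ℝ) ≤ K ^ 3 := by
    exact_mod_cast (Fintype.card_subtype_le _).trans_eq (by simp)
  calc L * ∑ p, y p - (K : ℝ) ^ 3 ≤ L * ∑ p, y p - Fintype.card (FullPattern H K L) := by linarith
    _ = ∑ p, (L * y p - 1) := by simp [Finset.mul_sum]
    _ ≤ ∑ p, (N p : ℝ) := Finset.sum_le_sum fun p _ => (Nat.sub_one_lt_floor _).le
    _ = M.card := by simp [hcard]

end Matching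

/-- A fractional vertex cover of the hypergraph `H`: nonnegative vertex weights whose sum over
each edge is at least `1`. Weights above `1` are allowed. -/
structure IsFractionalCover {α : Type*} (H : Finset (Finset α)) (g : α → ℝ) : Prop where
  nonneg : ∀ v, 0 ≤ g v
  one_le_sum : ∀ e ∈ H, 1 ≤ ∑ v ∈ e, g v

section FractionalCover

variable {n K L : ℕ} {H : Finset (Finset (Fin n))}

lemma comp_sort_le_of_le {m : ℕ} {α : Type*} [LinearOrder α] {v w : Fin m → α} (hw : Monotone w)
    (hle : v ≤ w) : v ∘ Tuple.sort v ≤ w := by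
  intro j
  rw [← Tuple.lt_card_le_iff_apply_le_of_monotone (Tuple.monotone_sort v)]
  calc (j : ℕ) < (Finset.Iic j).card := by simp
    _ ≤ _ := Finset.card_le_card_of_injOn (Tuple.sort v).symm
      (fun i hi => by simpa using (hle i).trans (hw (by simpa using hi))) (Equiv.injective _).injOn

lemma StableThreeGraph.image_mem (hH : StableThreeGraph H) {e : Finset (Fin n)}
    (he : e.card = 3) (heH : e ∈ H) {v : Fin 3 → Fin n} (hv : Function.Injective v)
    (hle : ∀ j, v j ≤ e.orderEmbOfFin he j) : Finset.univ.image v ∈ H := by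
  have hc : (Finset.univ.image v).card = 3 := by simp [Finset.card_image_of_injective _ hv]
  have hsort : v ∘ Tuple.sort v = (Finset.univ.image v).orderEmbOfFin hc :=
    Finset.orderEmbOfFin_unique hc (by simp)
      ((Tuple.monotone_sort v).strictMono_of_injective (hv.comp (Equiv.injective _)))
  refine hH _ e hc he (fun i => ?_) heH
  have := comp_sort_le_of_le (e.orderEmbOfFin he).monotone hle i
  rwa [hsort] at this

lemma sum_divNat_castLE_le {A : ℕ} (h : n ≤ A * L) {G : Fin A → ℝ} (hG : 0 ≤ G) :
    ∑ v : Fin n, G (Fin.castLE h v).divNat ≤ L * ∑ k, G k :=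
  calc ∑ v : Fin n, G (Fin.castLE h v).divNat
      = ∑ x ∈ Finset.univ.map (Fin.castLEEmb h), G x.divNat := by simp
    _ ≤ ∑ x : Fin (A * L), G x.divNat :=
        Finset.sum_le_sum_of_subset_of_nonneg (Finset.subset_univ _) fun _ _ _ => hG _
    _ = ∑ p : Fin A × Fin L, G p.1 := finProdFinEquiv.symm.sum_comp fun p => G p.1
    _ = L * ∑ k, G k := by simp [Fintype.sum_prod_type, Finset.mul_sum]

-- Block `k + 1` of an edge is lowered to block `k`, which makes any triple of the lowered pattern
-- coordinatewise smaller than the edge; block `0` receives weight `1`.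
lemma StableThreeGraph.isFullPattern_pred (hH : StableThreeGraph H) {e : Finset (Fin n)}
    (he : e.card = 3) (heH : e ∈ H) (hpos : ∀ v ∈ e, (v : ℕ) / L ≠ 0) :
    IsFullPattern H L fun j => (e.orderEmbOfFin he j : ℕ) / L - 1 := by
  intro v hv hblock
  refine hH.image_mem he heH hv fun j => (Nat.lt_of_div_lt_div (c := L) ?_).le
  rw [hblock j]
  exact Nat.sub_one_lt (hpos _ (e.orderEmbOfFin_mem he j))

lemma StableThreeGraph.exists_cover_of_covering (hH : StableThreeGraph H)
    (hcard : ∀ e ∈ H, e.card = 3) (hn : n ≤ (K + 1) * L) {f : Fin K → ℝ} (hf : 0 ≤ f)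
    (hcov : 1 ≤ (patternIncidence H K L).mulVec f) :
    ∃ g : Fin n → ℝ, IsFractionalCover H g ∧ ∑ v, g v ≤ L * (1 + ∑ k, f k) := by
  let G : Fin (K + 1) → ℝ := Fin.cons 1 f
  have hG : 0 ≤ G := Fin.cases zero_le_one hf
  let block : Fin n → Fin (K + 1) := fun v => (Fin.castLE hn v).divNat
  refine ⟨fun v => G (block v), ⟨fun v => hG _, fun e he => ?_⟩, ?_⟩
  · by_cases hpos : ∀ v ∈ e, block v ≠ 0
    · have he3 := hcard e he
      have hblock : ∀ j, block (e.orderEmbOfFin he3 j) ≠ 0 := fun j =>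
        hpos _ (e.orderEmbOfFin_mem he3 j)
      let p : FullPattern H K L := ⟨fun j => (block (e.orderEmbOfFin he3 j)).pred (hblock j),
        hH.isFullPattern_pred he3 he fun v hv => Fin.val_ne_zero_iff.2 (hpos v hv)⟩
      calc (1 : ℝ) ≤ ∑ j, f (p.1 j) := (hcov p).trans_eq (patternIncidence_mulVec f p)
        _ = ∑ j, G (block (e.orderEmbOfFin he3 j)) :=
            Finset.sum_congr rfl fun j _ => by
              rw [← Fin.succ_pred _ (hblock j)]
              rfl
        _ = ∑ v ∈ e, G (block v) := by
            rw [← Finset.sum_coe_sort e, ← (e.orderIsoOfFin he3).toEquiv.sum_comp]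
            rfl
    · push Not at hpos
      obtain ⟨v, hv, h0⟩ := hpos
      calc (1 : ℝ) = G (block v) := by rw [h0]; rfl
        _ ≤ ∑ v ∈ e, G (block v) :=
            Finset.single_le_sum (f := fun v => G (block v)) (fun v _ => hG _) hv
  · simpa [G, Fin.sum_univ_succ] using sum_divNat_castLE_le hn hG

lemma StableThreeGraph.exists_cover_sum_le (hH : StableThreeGraph H)
    (hcard : ∀ e ∈ H, e.card = 3)
    (hM : ∀ M ⊆ H, (M : Set (Finset (Fin n))).Pairwise Disjoint → M.card < n / 4)
    (hK : 0 < K) (hn : K * K ^ 3 ≤ n) :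
    ∃ g : Fin n → ℝ, IsFractionalCover H g ∧ ∑ v, g v ≤ n / 4 + 3 * (n / K) := by
  let L := n / K
  have hKL : K * L ≤ n := Nat.mul_div_le n K
  have hL : K ^ 3 ≤ L := (Nat.le_div_iff_mul_le hK).2 (by linarith)
  have hnL : n ≤ (K + 1) * L := by
    have : n < K * (L + 1) := Nat.lt_mul_div_succ n hK
    have : K ≤ L := (Nat.le_self_pow (by norm_num) K).trans hL
    linarith
  have hKL' : (K : ℝ) * L ≤ n := by exact_mod_cast hKL
  have : Nonempty (Fin K) := ⟨⟨0, hK⟩⟩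
  rcases exists_covering_or_exists_packing (patternIncidence H K L)
    (by positivity : (0 : ℝ) < K / 4 + 2) with ⟨f, hf, hsum, hcov⟩ | ⟨y, hy, hsum, hcap⟩
  · obtain ⟨g, hg, hgsum⟩ := hH.exists_cover_of_covering hcard hnL hf hcov
    refine ⟨g, hg, hgsum.trans ?_⟩
    rw [hsum]
    linarith [(Nat.cast_div_le : ((n / K : ℕ) : ℝ) ≤ n / K)]
  · obtain ⟨M, hMH, hMdisj, hMcard⟩ := exists_matching_of_fractional_matching hKL hy hcap
    have hlt : (M.card : ℝ) < n / 4 :=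
      (Nat.cast_lt.2 (hM M hMH hMdisj)).trans_le (by exact_mod_cast Nat.cast_div_le)
    have hL' : (K : ℝ) ^ 3 ≤ L := by exact_mod_cast hL
    have hnL' : (n : ℝ) ≤ (K + 1) * L := by exact_mod_cast hnL
    have hKpos : (0 : ℝ) < (K : ℝ) ^ 3 := by positivity
    rw [hsum] at hMcard
    exfalso
    linarith

lemma StableThreeGraph.exists_small_cover {ε : ℝ} (hε : 0 < ε) :
    ∃ n₀ : ℕ, ∀ n : ℕ, n₀ ≤ n → ∀ H : Finset (Finset (Fin n)), (∀ e ∈ H, e.card = 3) →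
      StableThreeGraph H →
      (∀ M ⊆ H, (M : Set (Finset (Fin n))).Pairwise Disjoint → M.card < n / 4) →
      ∃ g : Fin n → ℝ, IsFractionalCover H g ∧ ∑ v, g v ≤ n / 4 + ε * n := by
  obtain ⟨K, hK⟩ := exists_nat_gt (3 / ε)
  have hK₀ : (0 : ℝ) < K := lt_trans (by positivity) hK
  refine ⟨K * K ^ 3, fun n hn H hcard hH hM => ?_⟩
  obtain ⟨g, hg, hsum⟩ := hH.exists_cover_sum_le hcard hM (by exact_mod_cast hK₀) hn
  refine ⟨g, hg, hsum.trans (add_le_add_right ?_ _)⟩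
  calc 3 * ((n : ℝ) / K) = 3 / K * n := by ring
    _ ≤ ε * n := by
      gcongr
      rw [div_le_iff₀ hK₀]
      exact ((div_lt_iff₀' hε).1 hK).le

end FractionalCover

/-! ### Counting edges with a fractional vertex cover -/

section CoverCount

variable {ι : Type*} [Fintype ι]

-- The mass missing from the weights `1 / S` is put on an extra point of value `0`.
lemma sum_triple_le_of_forall_twoPointLaw {g : ι → ℝ} (hg : ∀ i, 0 ≤ g i) {S : ℝ} (hS : 0 < S)
    (hcard : Fintype.card ι ≤ S) {w : ℝ → ℝ → ℝ → ℝ} (hw : ∀ x y z, 0 ≤ w x y z) {C : ℝ}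
    (h : ∀ P Q R : TwoPointLaw ((∑ i, g i) / S), P.expect₃ Q R w ≤ C) :
    ∑ i, ∑ j, ∑ k, w (g i) (g j) (g k) ≤ C * S ^ 3 := by
  let m : Option ι → ℝ := fun o => o.elim (1 - Fintype.card ι / S) fun _ => 1 / S
  let f : Option ι → ℝ := fun o => o.elim 0 g
  have hm : m ∈ stdSimplex ℝ (Option ι) := by
    refine ⟨Option.forall.2 ⟨sub_nonneg.2 (div_le_one_of_le₀ hcard hS.le), fun _ => ?_⟩, ?_⟩
    · exact (one_div_pos.2 hS).le
    · simp only [Fintype.sum_option, m, Option.elim, Finset.sum_const, Finset.card_univ,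
        nsmul_eq_mul]
      ring
  have hf : ∀ o, 0 ≤ f o := Option.forall.2 ⟨le_rfl, hg⟩
  have hmean : ∑ o, m o * f o = (∑ i, g i) / S := by
    simp [m, f, ← Finset.mul_sum, div_eq_inv_mul]
  have hdrop : ∀ φ : Option ι → ℝ, (∀ o, 0 ≤ φ o) → 1 / S * ∑ i, φ (some i) ≤ ∑ o, m o * φ o := by
    intro φ hφ
    rw [Fintype.sum_option, Finset.mul_sum]
    exact le_add_of_nonneg_left (mul_nonneg (hm.1 none) (hφ none))
  have hsum : ∀ φ : Option ι → ℝ, (∀ o, 0 ≤ φ o) → 0 ≤ ∑ o, m o * φ o := fun φ hφ =>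
    Finset.sum_nonneg fun o _ => mul_nonneg (hm.1 o) (hφ o)
  have hbound : 1 / S * ∑ i, 1 / S * ∑ j, 1 / S * ∑ k, w (g i) (g j) (g k) ≤ C :=
    calc _ ≤ 1 / S * ∑ i, 1 / S * ∑ j, ∑ k, m k * w (g i) (g j) (f k) := by
          gcongr with i _ j _
          exact hdrop (fun k => w (g i) (g j) (f k)) fun _ => hw _ _ _
      _ ≤ 1 / S * ∑ i, ∑ j, m j * ∑ k, m k * w (g i) (f j) (f k) := by
          gcongr with i _
          exact hdrop (fun j => ∑ k, m k * w (g i) (f j) (f k)) fun _ => hsum _ fun _ => hw _ _ _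
      _ ≤ ∑ i, m i * ∑ j, m j * ∑ k, m k * w (f i) (f j) (f k) :=
          hdrop (fun i => ∑ j, m j * ∑ k, m k * w (f i) (f j) (f k)) fun _ =>
            hsum _ fun _ => hsum _ fun _ => hw _ _ _
      _ ≤ C := sum_mul_triple_le_of_forall_twoPointLaw hm hf (hmean ▸ h)
  simp only [← Finset.mul_sum, ← mul_assoc] at hbound
  rw [← div_le_iff₀ (by positivity)]
  exact le_of_eq_of_le (by ring) hbound

section OrderedTriples

variable {α : Type*} [DecidableEq α]

lemma six_mul_le_sum_orderings [Fintype α] {e : Finset α} (he : e.card = 3)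
    {w : α × α × α → ℝ} (hw : ∀ t, 0 ≤ w t) {c : ℝ}
    (hc : ∀ t : α × α × α, ({t.1, t.2.1, t.2.2} : Finset α) = e → c ≤ w t) :
    6 * c ≤ ∑ t : α × α × α with ({t.1, t.2.1, t.2.2} : Finset α) = e, w t := by
  obtain ⟨x, y, z, hxy, hxz, hyz, rfl⟩ := Finset.card_eq_three.1 he
  let T : Finset (α × α × α) := {(x, y, z), (x, z, y), (y, x, z), (y, z, x), (z, x, y), (z, y, x)}
  have hT : T.card = 6 := by
    simp [T, Finset.card_insert_of_notMem, hxy, hxz, hyz, hxy.symm, hxz.symm, hyz.symm]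
  have hsub : T ⊆ Finset.univ.filter fun t => ({t.1, t.2.1, t.2.2} : Finset α) = {x, y, z} := by
    intro t ht
    simp only [T, Finset.mem_insert, Finset.mem_singleton] at ht
    rcases ht with rfl | rfl | rfl | rfl | rfl | rfl <;> grind
  calc 6 * c = ∑ _t ∈ T, c := by simp [hT]
    _ ≤ ∑ t ∈ T, w t := Finset.sum_le_sum fun t ht => hc t (Finset.mem_filter.1 (hsub ht)).2
    _ ≤ _ := Finset.sum_le_sum_of_subset_of_nonneg hsub fun t _ _ => hw t

lemma six_mul_sum_le_sum_triples [Fintype α] {H : Finset (Finset α)} (hcard : ∀ e ∈ H, e.card = 3)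
    {w : α → α → α → ℝ} (hw : ∀ x y z, 0 ≤ w x y z) {c : Finset α → ℝ}
    (hc : ∀ x y z, {x, y, z} ∈ H → c {x, y, z} ≤ w x y z) :
    6 * ∑ e ∈ H, c e ≤ ∑ x, ∑ y, ∑ z, w x y z :=
  calc 6 * ∑ e ∈ H, c e = ∑ e ∈ H, 6 * c e := Finset.mul_sum _ _ _
    _ ≤ ∑ e ∈ H, ∑ t : α × α × α with ({t.1, t.2.1, t.2.2} : Finset α) = e, w t.1 t.2.1 t.2.2 :=
        Finset.sum_le_sum fun e he => six_mul_le_sum_orderings (hcard e he)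
          (fun _ => hw _ _ _) <| by
          rintro t rfl
          exact hc _ _ _ he
    _ ≤ ∑ t : α × α × α, w t.1 t.2.1 t.2.2 :=
        Finset.sum_fiberwise_le_sum_of_sum_fiber_nonneg fun _ _ =>
          Finset.sum_nonneg fun _ _ => hw _ _ _
    _ = ∑ x, ∑ y, ∑ z, w x y z := by simp only [Fintype.sum_prod_type]

lemma sum_triple_of_card_eq_three {x y z : α} (h : ({x, y, z} : Finset α).card = 3) (g : α → ℝ) :
    ∑ v ∈ {x, y, z}, g v = g x + g y + g z := by
  have hyz : y ≠ z := by rintro rfl; grind [Finset.card_le_two]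
  have hx : x ∉ ({y, z} : Finset α) := by grind [Finset.card_le_two]
  rw [Finset.sum_insert hx, Finset.sum_pair hyz, add_assoc]

end OrderedTriples

lemma card_add_card_light_le_of_cover [DecidableEq ι] {H : Finset (Finset ι)}
    (hcard : ∀ e ∈ H, e.card = 3) {g : ι → ℝ} (hg : IsFractionalCover H g) {S : ℝ} (hS : 0 < S)
    (hι : Fintype.card ι ≤ S) (hsum : ∑ v, g v ≤ S / 4) {τ : ℝ} (hτ₀ : 7 / 20 ≤ τ) (hτ : τ ≤ 1) :
    6 * (H.card + (1 - τ) / 16 * (H.filter fun e => ∀ v ∈ e, g v < τ).card) ≤ 37 / 64 * S ^ 3 :=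
  calc 6 * (H.card + (1 - τ) / 16 * (H.filter fun e => ∀ v ∈ e, g v < τ).card : ℝ)
      = 6 * ∑ e ∈ H, (1 + if ∀ v ∈ e, g v < τ then (1 - τ) / 16 else 0) := by
        rw [Finset.sum_add_distrib, ← Finset.sum_filter]
        simp [mul_comm]
    _ ≤ ∑ x, ∑ y, ∑ z, bonusHeavy τ (g x) (g y) (g z) := by
        refine six_mul_sum_le_sum_triples (w := fun x y z => bonusHeavy τ (g x) (g y) (g z)) hcard
          (fun _ _ _ => bonusHeavy_nonneg _ _ _ hτ) fun x y z he => ?_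
        have h1 := (hg.one_le_sum _ he).trans_eq (sum_triple_of_card_eq_three (hcard _ he) g)
        simp only [bonusHeavy, heavy, if_pos h1, Finset.forall_mem_insert, Finset.mem_singleton,
          forall_eq]
        split_ifs <;> linarith
    _ ≤ 37 / 64 * S ^ 3 :=
        sum_triple_le_of_forall_twoPointLaw (w := bonusHeavy τ) hg.nonneg hS hι
          (fun _ _ _ => bonusHeavy_nonneg _ _ _ hτ) fun P Q R =>
            TwoPointLaw.expect₃_bonusHeavy_le hτ₀ hτ ((div_le_iff₀ hS).2 (by linarith))

end CoverCount

section Counting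

lemma card_sdiff_lt_card_sdiff_add {α : Type*} [DecidableEq α] {s t : Finset α} {δ : ℝ}
    (h : (s.card : ℝ) < t.card + δ) : ((s \ t).card : ℝ) < (t \ s).card + δ := by
  have hs : ((s \ t).card : ℝ) + (s ∩ t).card = s.card := by
    exact_mod_cast Finset.card_sdiff_add_card_inter s t
  have ht : ((t \ s).card : ℝ) + (s ∩ t).card = t.card := by
    rw [Finset.inter_comm]
    exact_mod_cast Finset.card_sdiff_add_card_inter t s
  linarith

lemma cube_sub_le_six_mul_choose (n : ℕ) :
    (n : ℝ) ^ 3 - 6 * (n : ℝ) ^ 2 ≤ 6 * (n.choose 3 : ℝ) := by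
  induction n with
  | zero => simp
  | succ n ih =>
    rw [Nat.choose_succ_succ' n 2]
    push_cast [Nat.cast_choose_two]
    linarith [(Nat.cast_nonneg n : (0 : ℝ) ≤ n)]

lemma six_mul_choose_le_cube (n : ℕ) : 6 * (n.choose 3 : ℝ) ≤ (n : ℝ) ^ 3 := by
  have h := Nat.choose_le_pow_div (α := ℝ) 3 n
  norm_num [Nat.factorial] at h
  linarith

lemma card_H3Star_add_choose (n k : ℕ) : (H3Star n k).card + (n - k).choose 3 = n.choose 3 := by
  have htail : (Finset.univ.filter fun v : Fin n => ¬(v : ℕ) < k).card = n - k := by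
    have := Finset.card_filter_add_card_filter_not (s := .univ) fun v : Fin n => (v : ℕ) < k
    rw [Fin.card_filter_val_lt, Finset.card_univ, Fintype.card_fin] at this
    omega
  have hmiss : (Finset.powersetCard 3 (Finset.univ : Finset (Fin n))).filter
      (fun e => ¬∃ v : Fin n, v ∈ e ∧ (v : ℕ) < k) =
      Finset.powersetCard 3 (Finset.univ.filter fun v : Fin n => ¬(v : ℕ) < k) := by
    ext e
    grind
  have hsplit := Finset.card_filter_add_card_filter_not
    (s := Finset.powersetCard 3 (Finset.univ : Finset (Fin n))) fun e =>
      ∃ v : Fin n, v ∈ e ∧ (v : ℕ) < k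
  rwa [hmiss, Finset.card_powersetCard, Finset.card_powersetCard, htail, Finset.card_univ,
    Fintype.card_fin] at hsplit

lemma card_le_of_forall_exists_mem {α : Type*} [Fintype α] {S : Finset (Finset α)}
    (hS : ∀ e ∈ S, e.card = 3) {Q : Finset α} (hQ : ∀ e ∈ S, ∃ v ∈ Q, v ∈ e) :
    S.card ≤ Q.card * Fintype.card α ^ 2 := by
  classical
  have hsub : S ⊆ (Q ×ˢ (Finset.univ : Finset (α × α))).image
      fun t => ({t.1, t.2.1, t.2.2} : Finset α) := by
    intro e he
    obtain ⟨v, hvQ, hve⟩ := hQ e he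
    obtain ⟨x, y, -, hxy⟩ := Finset.card_eq_two.1
      (show (e.erase v).card = 2 by rw [Finset.card_erase_of_mem hve, hS e he])
    refine Finset.mem_image.2 ⟨(v, x, y), by simp [hvQ], ?_⟩
    rw [← hxy, Finset.insert_erase hve]
  calc S.card ≤ _ := Finset.card_le_card hsub
    _ ≤ _ := Finset.card_image_le
    _ = Q.card * Fintype.card α ^ 2 := by simp [pow_two]

lemma card_sdiff_H3Star_le {n k : ℕ} {H : Finset (Finset (Fin n))} (hcard : ∀ e ∈ H, e.card = 3)
    (g : Fin n → ℝ) (τ : ℝ) :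
    (H \ H3Star n k).card ≤ (H.filter fun e => ∀ v ∈ e, g v < τ).card +
      (Finset.univ.filter fun v : Fin n => k ≤ (v : ℕ) ∧ τ ≤ g v).card * n ^ 2 := by
  rw [← Finset.card_filter_add_card_filter_not (s := H \ H3Star n k) fun e => ∀ v ∈ e, g v < τ]
  refine add_le_add (Finset.card_le_card (Finset.filter_subset_filter _ Finset.sdiff_subset)) ?_
  refine (card_le_of_forall_exists_mem ?_ ?_).trans_eq (by rw [Fintype.card_fin])
  · intro e he
    exact hcard e (Finset.mem_sdiff.1 (Finset.mem_filter.1 he).1).1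
  · intro e he
    simp only [Finset.mem_filter, Finset.mem_sdiff, H3Star, Finset.mem_powersetCard] at he ⊢
    push Not at he
    obtain ⟨⟨heH, hstar⟩, v, hv, hτ⟩ := he
    exact ⟨v, ⟨Finset.mem_univ _, hstar ⟨Finset.subset_univ _, hcard e heH⟩ v hv, hτ⟩, hv⟩

lemma card_filter_ge_tail_le_of_antitone {n : ℕ} {g : Fin n → ℝ} (hg : Antitone g) (k : ℕ) (τ : ℝ) :
    (Finset.univ.filter fun v : Fin n => k ≤ (v : ℕ) ∧ τ ≤ g v).card
      ≤ (Finset.univ.filter fun v => τ ≤ g v).card - k := by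
  rw [← Nat.card_Ico]
  refine Finset.card_le_card_of_injOn Fin.val (fun v hv => ?_) Fin.val_injective.injOn
  obtain ⟨-, hkv, hτv⟩ := Finset.mem_filter.1 hv
  exact Finset.mem_coe.2 <| Finset.mem_Ico.2
    ⟨hkv, (Tuple.lt_card_ge_iff_apply_ge_of_antitone hg).2 hτv⟩

lemma mul_card_filter_le_sum {α : Type*} [Fintype α] {g : α → ℝ} (hg : ∀ v, 0 ≤ g v) (τ : ℝ) :
    τ * (Finset.univ.filter fun v => τ ≤ g v).card ≤ ∑ v, g v :=
  calc τ * (Finset.univ.filter fun v => τ ≤ g v).card = ∑ v with τ ≤ g v, τ := by simp [mul_comm]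
    _ ≤ ∑ v with τ ≤ g v, g v := Finset.sum_le_sum fun v hv => (Finset.mem_filter.1 hv).2
    _ ≤ ∑ v, g v := Finset.sum_le_sum_of_subset_of_nonneg (Finset.filter_subset _ _)
        fun v _ _ => hg v

end Counting

section Closeness

variable {η : ℝ} {n : ℕ} {H : Finset (Finset (Fin n))} {g : Fin n → ℝ}

lemma one_add_div_ten_pow_three_le {x : ℝ} (h₀ : 0 ≤ x) (h₁ : x ≤ 1) :
    (1 + x / 10) ^ 3 ≤ 1 + 2 / 5 * x := by
  nlinarith [mul_nonneg h₀ (sub_nonneg.2 h₁), mul_nonneg (mul_nonneg h₀ h₀) (sub_nonneg.2 h₁)]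

lemma cube_sub_le_six_mul_choose_sub_choose (n : ℕ) :
    37 / 64 * (n : ℝ) ^ 3 - 6 * (n : ℝ) ^ 2
      ≤ 6 * ((n.choose 3 : ℝ) - ((3 * n / 4).choose 3 : ℝ)) := by
  have hdiv : ((3 * n / 4 : ℕ) : ℝ) ≤ 3 / 4 * n := by
    refine Nat.cast_div_le.trans_eq ?_
    push_cast
    ring
  have hcube : 6 * ((3 * n / 4).choose 3 : ℝ) ≤ (3 / 4 * (n : ℝ)) ^ 3 :=
    (six_mul_choose_le_cube _).trans (by gcongr)
  linarith [cube_sub_le_six_mul_choose n]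

lemma card_light_le_of_cover (hη : 0 < η) (hη₁ : η ≤ 1 / 6) (hn : 32 ≤ η ^ 4 * n)
    (hcard : ∀ e ∈ H, e.card = 3)
    (hedges : (n.choose 3 : ℝ) - ((3 * n / 4).choose 3 : ℝ) - η ^ 4 * (n : ℝ) ^ 3 < H.card)
    (hg : IsFractionalCover H g) (hsum : ∑ v, g v ≤ n / 4 + η ^ 4 / 40 * n) :
    ((H.filter fun e => ∀ v ∈ e, g v < 1 - η).card : ℝ) ≤ 18 * η ^ 3 * (n : ℝ) ^ 3 := by
  have hn₀ : (0 : ℝ) < n := pos_of_mul_pos_right (by linarith : 0 < η ^ 4 * n) (by positivity)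
  have hsquare : 32 * (n : ℝ) ^ 2 ≤ η ^ 4 * (n : ℝ) ^ 3 :=
    calc 32 * (n : ℝ) ^ 2 ≤ η ^ 4 * n * (n : ℝ) ^ 2 := by gcongr
      _ = η ^ 4 * (n : ℝ) ^ 3 := by ring
  have hupper : 6 * (H.card + η / 16 * (H.filter fun e => ∀ v ∈ e, g v < 1 - η).card)
      ≤ 37 / 64 * ((1 + η ^ 4 / 10) * n) ^ 3 := by
    convert card_add_card_light_le_of_cover hcard hg (S := (1 + η ^ 4 / 10) * n) (by positivity)
      (by rw [Fintype.card_fin]; nlinarith [hn₀]) (by linarith) (τ := 1 - η) (by linarith)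
      (by linarith)
    ring
  have hcube : ((1 + η ^ 4 / 10) * n) ^ 3 ≤ (1 + 2 / 5 * η ^ 4) * (n : ℝ) ^ 3 := by
    rw [mul_pow]
    gcongr
    exact one_add_div_ten_pow_three_le (by positivity) (pow_le_one₀ hη.le (by linarith))
  refine le_of_mul_le_mul_left ?_ hη
  linarith [cube_sub_le_six_mul_choose_sub_choose n, (by positivity : 0 ≤ η ^ 4 * (n : ℝ) ^ 3)]

lemma card_filter_ge_sub_le_of_sum_le (hη : 0 < η) (hη₁ : η ≤ 1 / 6) (hn : 32 ≤ η ^ 4 * n)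
    (hg : ∀ v, 0 ≤ g v) (hsum : ∑ v, g v ≤ n / 4 + η ^ 4 / 40 * n) :
    (((Finset.univ.filter fun v => 1 - η ≤ g v).card - (n / 4 - 1) : ℕ) : ℝ)
      ≤ 2 / 5 * η * n := by
  set a := (Finset.univ.filter fun v => 1 - η ≤ g v).card
  have hmarkov : (1 - η) * a ≤ (n : ℝ) / 4 + η ^ 4 / 40 * n :=
    (mul_card_filter_le_sum hg (1 - η)).trans hsum
  have hfloor : (n : ℝ) ≤ 4 * (n / 4 - 1 : ℕ) + 7 := by
    exact_mod_cast (by omega : n ≤ 4 * (n / 4 - 1) + 7)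
  have hpow : η ^ 4 * n ≤ (1 / 6) ^ 3 * η * n := by
    rw [pow_succ]
    gcongr
  rcases le_total a (n / 4 - 1) with h | h
  · rw [Nat.sub_eq_zero_of_le h, Nat.cast_zero]
    positivity
  · rw [Nat.cast_sub h]
    have hscaled : (1 - η) * a ≤ (1 - η) * ((n : ℝ) / 4 - 7 / 4 + 2 / 5 * η * n) := by
      have : 2 / 5 * η * (η * n) ≤ 2 / 5 * (1 / 6) * (η * n) := by gcongr
      linarith
    linarith [le_of_mul_le_mul_left hscaled (by linarith)]

lemma card_H3Star_sdiff_lt_of_antitone_cover (hη : 0 < η) (hη₁ : η ≤ 1 / 6)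
    (hn : 32 ≤ η ^ 4 * n) (hcard : ∀ e ∈ H, e.card = 3)
    (hedges : (n.choose 3 : ℝ) - ((3 * n / 4).choose 3 : ℝ) - η ^ 4 * (n : ℝ) ^ 3 < H.card)
    (hg : IsFractionalCover H g) (hsum : ∑ v, g v ≤ n / 4 + η ^ 4 / 40 * n) (hanti : Antitone g) :
    ((H3Star n (n / 4 - 1) \ H).card : ℝ) < η * (n : ℝ) ^ 3 := by
  have hn₀ : (0 : ℝ) < n := pos_of_mul_pos_right (by linarith : 0 < η ^ 4 * n) (by positivity)
  have hstar : ((H3Star n (n / 4 - 1)).card : ℝ) < H.card + η ^ 4 * (n : ℝ) ^ 3 := by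
    have hchoose : (3 * n / 4).choose 3 ≤ (n - (n / 4 - 1)).choose 3 :=
      Nat.choose_le_choose 3 (by omega)
    have : (H3Star n (n / 4 - 1)).card + (3 * n / 4).choose 3 ≤ n.choose 3 :=
      (Nat.add_le_add_left hchoose _).trans_eq (card_H3Star_add_choose n _)
    have : ((H3Star n (n / 4 - 1)).card : ℝ) + (3 * n / 4).choose 3 ≤ n.choose 3 := by
      exact_mod_cast this
    linarith
  have hlight := card_light_le_of_cover hη hη₁ hn hcard hedges hg hsum
  have hhigh := (Nat.cast_le.2 (card_filter_ge_tail_le_of_antitone hanti (n / 4 - 1) (1 - η))).trans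
    (card_filter_ge_sub_le_of_sum_le hη hη₁ hn hg.nonneg hsum)
  have houtside : ((H \ H3Star n (n / 4 - 1)).card : ℝ)
      ≤ 18 * η ^ 3 * (n : ℝ) ^ 3 + 2 / 5 * η * n * (n : ℝ) ^ 2 :=
    calc ((H \ H3Star n (n / 4 - 1)).card : ℝ)
        ≤ (H.filter fun e => ∀ v ∈ e, g v < 1 - η).card +
            (Finset.univ.filter fun v : Fin n => n / 4 - 1 ≤ (v : ℕ) ∧ 1 - η ≤ g v).card *
              (n : ℝ) ^ 2 := by
          exact_mod_cast card_sdiff_H3Star_le hcard g (1 - η)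
      _ ≤ _ := by gcongr
  calc ((H3Star n (n / 4 - 1) \ H).card : ℝ)
      < (H \ H3Star n (n / 4 - 1)).card + η ^ 4 * (n : ℝ) ^ 3 := card_sdiff_lt_card_sdiff_add hstar
    _ ≤ (18 * η ^ 2 + 2 / 5 + η ^ 3) * η * (n : ℝ) ^ 3 := by linarith
    _ ≤ (18 * (1 / 6) ^ 2 + 2 / 5 + (1 / 6) ^ 3) * η * (n : ℝ) ^ 3 := by gcongr
    _ ≤ η * (n : ℝ) ^ 3 := by linarith [(by positivity : 0 ≤ η * (n : ℝ) ^ 3)]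

lemma exists_perm_antitone (g : Fin n → ℝ) : ∃ σ : Equiv.Perm (Fin n), Antitone (g ∘ σ.symm) :=
  ⟨(Tuple.sort (-g)).symm, fun _ _ huv => neg_le_neg_iff.1 (Tuple.monotone_sort (-g) huv)⟩

lemma IsFractionalCover.image_perm {α : Type*} [DecidableEq α] {H : Finset (Finset α)} {g : α → ℝ}
    (hg : IsFractionalCover H g) (σ : Equiv.Perm α) :
    IsFractionalCover (H.image fun e => e.image σ) (g ∘ σ.symm) where
  nonneg _ := hg.nonneg _
  one_le_sum := Finset.forall_mem_image.2 fun e he => by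
    rw [Finset.sum_image σ.injective.injOn]
    simpa using hg.one_le_sum e he

lemma exists_perm_card_H3Star_sdiff_lt_of_cover (hη : 0 < η) (hη₁ : η ≤ 1 / 6)
    (hn : 32 ≤ η ^ 4 * n) (hcard : ∀ e ∈ H, e.card = 3)
    (hedges : (n.choose 3 : ℝ) - ((3 * n / 4).choose 3 : ℝ) - η ^ 4 * (n : ℝ) ^ 3 < H.card)
    (hg : IsFractionalCover H g) (hsum : ∑ v, g v ≤ n / 4 + η ^ 4 / 40 * n) :
    ∃ σ : Equiv.Perm (Fin n),
      ((H3Star n (n / 4 - 1) \ H.image fun e => e.image σ).card : ℝ) < η * (n : ℝ) ^ 3 := by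
  obtain ⟨σ, hσ⟩ := exists_perm_antitone g
  refine ⟨σ, card_H3Star_sdiff_lt_of_antitone_cover hη hη₁ hn ?_ ?_ (hg.image_perm σ) ?_ hσ⟩
  · rw [Finset.forall_mem_image]
    intro e he
    rw [Finset.card_image_of_injective _ σ.injective, hcard e he]
  · rwa [Finset.card_image_of_injective _ (Finset.image_injective σ.injective)]
  · simpa only [Function.comp_apply, Equiv.sum_comp σ.symm g] using hsum

lemma card_H3Star_sdiff_lt_of_one_div_six_lt (hη : 1 / 6 < η) (hn : 0 < n) (k : ℕ)
    (F : Finset (Finset (Fin n))) : ((H3Star n k \ F).card : ℝ) < η * (n : ℝ) ^ 3 :=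
  calc ((H3Star n k \ F).card : ℝ) ≤ (H3Star n k).card := by
        exact_mod_cast Finset.card_le_card Finset.sdiff_subset
    _ ≤ n.choose 3 := by exact_mod_cast Nat.le.intro (card_H3Star_add_choose n k)
    _ ≤ 1 / 6 * (n : ℝ) ^ 3 := by linarith [six_mul_choose_le_cube n]
    _ < η * (n : ℝ) ^ 3 := by gcongr

end Closeness

theorem stability_close_to_H3Star_general (η : ℝ) (hη : 0 < η) :
    ∃ n₀ : ℕ, ∀ n : ℕ, n₀ ≤ n →
    ∀ H : Finset (Finset (Fin n)),
      (∀ e ∈ H, e.card = 3) →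
      StableThreeGraph H →
      ((Nat.choose n 3 : ℝ) - (Nat.choose (3 * n / 4) 3 : ℝ) - η ^ 4 * (n : ℝ) ^ 3
        < (H.card : ℝ)) →
      (∀ M ⊆ H, (M : Set (Finset (Fin n))).Pairwise (fun a b => Disjoint a b) →
        M.card < n / 4) →
      ∃ σ : Equiv.Perm (Fin n),
        (((H3Star n (n / 4 - 1)) \ (H.image (fun e => e.image σ))).card : ℝ)
          < η * (n : ℝ) ^ 3 := by
  rcases le_or_gt η (1 / 6) with hη₁ | hη₁
  · obtain ⟨n₁, hn₁⟩ := StableThreeGraph.exists_small_cover (ε := η ^ 4 / 40) (by positivity)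
    obtain ⟨n₂, hn₂⟩ := exists_nat_ge (32 / η ^ 4)
    refine ⟨max n₁ n₂, fun n hn H hcard hH hedges hM => ?_⟩
    obtain ⟨g, hg, hsum⟩ := hn₁ n (le_of_max_le_left hn) H hcard hH hM
    have hlarge : 32 ≤ η ^ 4 * (n : ℝ) :=
      (div_le_iff₀' (by positivity)).1 (hn₂.trans (by exact_mod_cast le_of_max_le_right hn))
    exact exists_perm_card_H3Star_sdiff_lt_of_cover hη hη₁ hlarge hcard hedges hg hsum
  · exact ⟨1, fun n hn H _ _ _ _ => ⟨1, card_H3Star_sdiff_lt_of_one_div_six_lt hη₁ hn _ _⟩⟩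

/-- Gao–Lu–Ma–Yu, special case: For every `η > 0` there is `n₀` such
that for every `n ≥ n₀` divisible by 4 and every stable 3-graph `H` on `[n]` with
`e(H) > C(n,3) - C(3n/4,3) - η⁴n³` and `ν(H) < n/4`, the graph `H` is `η`-close to
`H₃^*(n, n/4 - 1)`: some isomorphic copy `H'` of `H` on `[n]` (given by a vertex
permutation) satisfies `|E(H₃^*(n, n/4-1)) \ E(H')| < η·n³`. -/
theorem stability_close_to_H3Star (η : ℝ) (hη : 0 < η) :
    ∃ n₀ : ℕ, ∀ n : ℕ, n₀ ≤ n → 4 ∣ n →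
    ∀ H : Finset (Finset (Fin n)),
      (∀ e ∈ H, e.card = 3) →
      StableThreeGraph H →
      ((Nat.choose n 3 : ℝ) - (Nat.choose (3 * n / 4) 3 : ℝ) - η ^ 4 * (n : ℝ) ^ 3
        < (H.card : ℝ)) →
      (∀ M ⊆ H, (M : Set (Finset (Fin n))).Pairwise (fun a b => Disjoint a b) →
        M.card < n / 4) →
      ∃ σ : Equiv.Perm (Fin n),
        (((H3Star n (n / 4 - 1)) \ (H.image (fun e => e.image σ))).card : ℝ)
          < η * (n : ℝ) ^ 3 :=
  (stability_close_to_H3Star_general η hη).imp fun _ h n hn _ => h n hn
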